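/- arXiv:1309.0087 — 4 statements merged into one kernel-verified Lean document; each statement's English description precedes it below -/
import Mathlib

section
/- Let $G$ be a weighted graph on a finite vertex set $V$ with weighted adjacency matrix $A$. Then $\det A = \sum_{\Gamma \in S(G)} (-1)^{sg(\Gamma)}\, 2^{c(\Gamma)} \prod_{e \in P^2(\Gamma)} w(e)^2 \prod_{e \in C(\Gamma)} w(e)$, where the sum runs over all sesquivalent spanning subgraphs $\Gamma$ of $G$. -/
open Finset

variable {V : Type*}

/-- The degree of a vertex `v` in the (sub)graph given by the edge set `Γ`. -/
def edgeDeg [Fintype V] [DecidableEq V] (Γ : Finset (Sym2 V)) (v : V) : ℕ :=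
  (Γ.filter (fun e => v ∈ e)).card

/-- `Γ` (a finite set of edges, i.e. of unordered pairs of vertices) is a sesquivalent
spanning subgraph of the weighted graph with edge-weight function `w` : all its edges are
genuine edges of the graph (non-loops of nonzero weight), every vertex has degree 1 or 2,
and no vertex of degree 1 is adjacent to a vertex of degree 2 — equivalently, every
connected component is a single edge (`K₂`) or a cycle, and every vertex is covered. -/
def IsSesqSpanning [Fintype V] [DecidableEq V] (w : Sym2 V → ℝ) (Γ : Finset (Sym2 V)) : Prop :=
  (∀ e ∈ Γ, ¬ e.IsDiag ∧ w e ≠ 0) ∧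
  (∀ v : V, edgeDeg Γ v = 1 ∨ edgeDeg Γ v = 2) ∧
  (∀ u v : V, s(u, v) ∈ Γ → edgeDeg Γ u = 1 → edgeDeg Γ v = 1)

/-- `c(Γ)`: the number of connected components of `Γ` which are cycles, i.e. in which
every vertex has degree 2. -/
noncomputable def cycleCompCount [Fintype V] [DecidableEq V] (Γ : Finset (Sym2 V)) : ℕ :=
  Nat.card {C : (SimpleGraph.fromEdgeSet (↑Γ : Set (Sym2 V))).ConnectedComponent //
    ∀ v ∈ C.supp, edgeDeg Γ v = 2}

/-- `sg(Γ)`: the number of connected components of `Γ` with an even number of vertices. -/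
noncomputable def evenCompCount [Fintype V] [DecidableEq V] (Γ : Finset (Sym2 V)) : ℕ :=
  Nat.card {C : (SimpleGraph.fromEdgeSet (↑Γ : Set (Sym2 V))).ConnectedComponent //
    Even (Nat.card C.supp)}

/-- `P²(Γ)`: the edges of `Γ` lying in single-edge (`K₂`) components, i.e. whose two
endpoints both have degree 1. -/
def matchingEdges [Fintype V] [DecidableEq V] (Γ : Finset (Sym2 V)) : Finset (Sym2 V) :=
  Γ.filter (fun e => ∀ v : V, v ∈ e → edgeDeg Γ v = 1)

/-- `C(Γ)`: the edges of `Γ` lying in cycle components, i.e. whose two endpoints both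
have degree 2. -/
def cycleEdges [Fintype V] [DecidableEq V] (Γ : Finset (Sym2 V)) : Finset (Sym2 V) :=
  Γ.filter (fun e => ∀ v : V, v ∈ e → edgeDeg Γ v = 2)


section helpers

open Equiv Equiv.Perm

namespace Harary

variable [Fintype V] [DecidableEq V]

lemma edgeDeg_eq (Γ : Finset (Sym2 V)) (v : V) :
    edgeDeg Γ v = (univ.filter (fun u => s(v, u) ∈ Γ)).card := by
  unfold edgeDeg
  rw [← Finset.card_image_of_injective (univ.filter (fun u => s(v, u) ∈ Γ))
    (f := fun u => s(v, u)) (fun a b h => Sym2.congr_right.1 h)]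
  congr 1
  ext e
  simp only [mem_filter, mem_image, mem_univ, true_and]
  constructor
  · rintro ⟨h1, h2⟩
    obtain ⟨u, rfl⟩ := Sym2.mem_iff_exists.1 h2
    exact ⟨u, h1, rfl⟩
  · rintro ⟨u, h1, rfl⟩
    exact ⟨h1, by simp⟩

/-- The edge set of a permutation. -/
def permEdges (σ : Perm V) : Finset (Sym2 V) := univ.image (fun i => s(i, σ i))

lemma mem_permEdges (σ : Perm V) (u v : V) :
    s(u, v) ∈ permEdges σ ↔ σ u = v ∨ σ v = u := by
  simp only [permEdges, mem_image, mem_univ, true_and, Sym2.eq_iff]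
  constructor
  · rintro ⟨a, ⟨rfl, h⟩ | ⟨rfl, h⟩⟩ <;> simp [h]
  · rintro (h | h)
    · exact ⟨u, by simp [h]⟩
    · exact ⟨v, by simp [h]⟩

lemma edgeDeg_permEdges (σ : Perm V) (v : V) :
    edgeDeg (permEdges σ) v = if σ (σ v) = v then 1 else 2 := by
  rw [edgeDeg_eq]
  have : (univ.filter (fun u => s(v, u) ∈ permEdges σ)) = {σ v, σ⁻¹ v} := by
    ext u
    simp only [mem_permEdges, mem_filter, mem_univ, true_and, mem_insert, mem_singleton,
      Perm.eq_inv_iff_eq]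
    tauto
  rw [this]
  split_ifs with h
  · have : σ⁻¹ v = σ v := by rw [Perm.inv_eq_iff_eq, h]
    simp [this]
  · apply Finset.card_pair
    intro h'
    exact h (by rw [h']; simp)

lemma isSesq_permEdges (w : Sym2 V → ℝ) (hd : ∀ v, w s(v, v) = 0) (σ : Perm V)
    (hσ : ∀ i, w s(i, σ i) ≠ 0) : IsSesqSpanning w (permEdges σ) := by
  refine ⟨?_, ?_, ?_⟩
  · intro e he
    simp only [permEdges, mem_image, mem_univ, true_and] at he
    obtain ⟨i, rfl⟩ := he
    refine ⟨?_, hσ i⟩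
    rw [Sym2.mk_isDiag_iff]
    intro h
    have := hσ i
    rw [← h] at this
    exact this (hd i)
  · intro v
    rw [edgeDeg_permEdges]
    split_ifs <;> simp
  · intro u v h
    rw [mem_permEdges] at h
    rw [edgeDeg_permEdges, edgeDeg_permEdges]
    have : σ (σ u) = u → σ (σ v) = v := by
      intro h2
      rcases h with h | h
      · rw [← h, h2]
      · have : σ (σ (σ v)) = σ v := by rw [h, h2]
        exact σ.injective this
    split_ifs <;> simp_all

lemma prod_permEdges (w : Sym2 V → ℝ) (σ : Perm V) (hσ : ∀ i, σ i ≠ i) :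
    ∏ i, w s(i, σ i) = (∏ e ∈ matchingEdges (permEdges σ), (w e) ^ 2) *
      ∏ e ∈ cycleEdges (permEdges σ), w e := by
  rw [Finset.prod_comp w (fun i => s(i, σ i))]
  change ∏ b ∈ permEdges σ, _ = _
  rw [← Finset.prod_filter_mul_prod_filter_not (permEdges σ)
    (fun e => ∀ v : V, v ∈ e → edgeDeg (permEdges σ) v = 1)]
  have hfib : ∀ i, (univ.filter (fun j => s(j, σ j) = s(i, σ i))) =
      if σ (σ i) = i then {i, σ i} else {i} := by
    intro i
    ext j
    split_ifs with h <;> simp only [mem_filter, mem_univ, true_and, Sym2.eq_iff, mem_insert,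
      mem_singleton] <;> constructor
    · tauto
    · rintro (rfl | rfl) <;> simp [h]
    · rintro (h1 | ⟨rfl, h1⟩)
      · exact h1.1
      · exact absurd h1 h
    · rintro rfl; simp
  have hc : ∀ i, (∀ v : V, v ∈ s(i, σ i) → edgeDeg (permEdges σ) v = 1) ↔ σ (σ i) = i := by
    intro i
    simp only [edgeDeg_permEdges, Sym2.mem_iff]
    constructor
    · intro h
      by_contra h'
      have := h i (Or.inl rfl)
      simp [h'] at this
    · rintro h v (rfl | rfl) <;> simp [h]
  have hc2 : ∀ i, (∀ v : V, v ∈ s(i, σ i) → edgeDeg (permEdges σ) v = 2) ↔ ¬ σ (σ i) = i := by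
    intro i
    simp only [edgeDeg_permEdges, Sym2.mem_iff]
    constructor
    · intro h h'
      have := h i (Or.inl rfl)
      simp [h'] at this
    · rintro h v (rfl | rfl) <;> simp [h]
  congr 1
  · apply Finset.prod_congr rfl
    intro e he
    rw [mem_filter] at he
    obtain ⟨h1, h⟩ := he
    simp only [permEdges, mem_image, mem_univ, true_and] at h1
    obtain ⟨i, rfl⟩ := h1
    have h := (hc i).1 h
    rw [hfib, if_pos h, Finset.card_pair (hσ i).symm]
  · unfold cycleEdges
    have : (permEdges σ).filter (fun e => ¬ ∀ v : V, v ∈ e → edgeDeg (permEdges σ) v = 1) =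
      (permEdges σ).filter (fun e => ∀ v : V, v ∈ e → edgeDeg (permEdges σ) v = 2) := by
      apply Finset.filter_congr
      intro e he
      simp only [permEdges, mem_image, mem_univ, true_and] at he
      obtain ⟨i, rfl⟩ := he
      rw [hc, hc2]
    rw [this]
    apply Finset.prod_congr rfl
    intro e he
    rw [mem_filter] at he
    obtain ⟨h1, h⟩ := he
    simp only [permEdges, mem_image, mem_univ, true_and] at h1
    obtain ⟨i, rfl⟩ := h1
    rw [hc2] at h
    rw [hfib, if_neg h]
    simp

/-- The simple graph of an edge set. -/
abbrev gr (Γ : Finset (Sym2 V)) : SimpleGraph V := SimpleGraph.fromEdgeSet (↑Γ : Set (Sym2 V))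

lemma reachable_iff (σ : Perm V) (u v : V) :
    (gr (permEdges σ)).Reachable u v ↔ σ.SameCycle u v := by
  constructor
  · rintro ⟨p⟩
    induction p with
    | nil => exact SameCycle.refl _ _
    | cons h p ih =>
      refine SameCycle.trans ?_ ih
      simp only [SimpleGraph.fromEdgeSet_adj, mem_coe, mem_permEdges] at h
      rcases h.1 with h | h
      · rw [← h]; exact sameCycle_apply_right.2 (SameCycle.refl _ _)
      · rw [← h]; exact sameCycle_apply_left.2 (SameCycle.refl _ _)
  · intro h
    have key : ∀ (n : ℕ) (x : V), (gr (permEdges σ)).Reachable x ((σ ^ n) x) := by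
      intro n
      induction n with
      | zero => intro x; simp
      | succ n ih =>
        intro x
        refine (ih x).trans ?_
        rw [pow_succ', Perm.mul_apply]
        by_cases hx : (σ ^ n) x = σ ((σ ^ n) x)
        · rw [← hx]
        · apply SimpleGraph.Adj.reachable
          simp only [SimpleGraph.fromEdgeSet_adj, mem_coe, mem_permEdges]
          exact ⟨Or.inl trivial, hx⟩
    obtain ⟨n, rfl⟩ := h.exists_nat_pow_eq
    exact key n u

lemma sign_permEdges (σ : Perm V) (hσ : ∀ i, σ i ≠ i) :
    ((sign σ : ℤ) : ℝ) = (-1) ^ evenCompCount (permEdges σ) := by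
  classical
  have hs : sign σ = ∏ c ∈ σ.cycleFactorsFinset, sign c := by
    conv_lhs => rw [← cycleFactorsFinset_noncommProd σ]
    rw [Finset.map_noncommProd, Finset.noncommProd_eq_prod]
    rfl
  have h2 : ∏ C : (gr (permEdges σ)).ConnectedComponent,
      (if Even (Nat.card C.supp) then (-1 : ℤˣ) else 1) = ∏ c ∈ σ.cycleFactorsFinset, sign c := by
    refine Finset.prod_bij (fun C _ => σ.cycleOf (Quot.out C)) ?_ ?_ ?_ ?_
    · intro C _
      rw [cycleOf_mem_cycleFactorsFinset_iff]
      simp [hσ]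
    · intro C _ D _ h
      have hsc := (sameCycle_iff_cycleOf_eq_of_mem_support (by simp [hσ]) (by simp [hσ])).2 h
      rw [← reachable_iff] at hsc
      have := SimpleGraph.ConnectedComponent.sound hsc
      rw [← Quot.out_eq C, ← Quot.out_eq D]
      exact this
    · intro c hc
      obtain ⟨x, hx⟩ := (mem_cycleFactorsFinset_iff.1 hc).1.nonempty_support
      refine ⟨(gr (permEdges σ)).connectedComponentMk x, mem_univ _, ?_⟩
      rw [cycle_is_cycleOf hx hc]
      rw [← sameCycle_iff_cycleOf_eq_of_mem_support (by simp [hσ]) (by simp [hσ]),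
        ← reachable_iff]
      exact SimpleGraph.ConnectedComponent.exact (Quot.out_eq _)
    · intro C _
      have hcyc : (σ.cycleOf (Quot.out C)).IsCycle := isCycle_cycleOf _ (hσ _)
      rw [hcyc.sign]
      have : Nat.card C.supp = (σ.cycleOf (Quot.out C)).support.card := by
        suffices hset : C.supp = (↑(σ.cycleOf (Quot.out C)).support : Set V) by
          rw [hset, Nat.card_coe_set_eq, Set.ncard_coe_finset]
        ext x
        have hC : C = (gr (permEdges σ)).connectedComponentMk (Quot.out C) := (Quot.out_eq C).symm
        rw [SimpleGraph.ConnectedComponent.mem_supp_iff, mem_coe,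
          mem_support_cycleOf_iff' (hσ _), ← reachable_iff]
        constructor
        · intro h
          exact (SimpleGraph.ConnectedComponent.exact (h.trans hC)).symm
        · intro h
          rw [hC]
          exact SimpleGraph.ConnectedComponent.sound h.symm
      rw [this]
      split_ifs with h
      · simp [h.neg_one_pow]
      · simp [(Nat.not_even_iff_odd.1 h).neg_one_pow]
  rw [hs, ← h2, Finset.prod_ite]
  simp only [prod_const, one_pow, mul_one]
  unfold evenCompCount
  rw [Nat.card_eq_fintype_card, Fintype.card_subtype]
  push_cast
  rfl

lemma agree (σ τ : Perm V) (h : permEdges σ = permEdges τ) {x y : V} (hx : σ x = τ x)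
    (hxy : σ.SameCycle x y) : σ y = τ y := by
  have step : ∀ v, σ v = τ v → σ (σ v) = τ (σ v) := by
    intro v hv
    have h1 : s(σ v, σ (σ v)) ∈ permEdges τ := by rw [← h, mem_permEdges]; simp
    have h2 : s(σ v, τ (σ v)) ∈ permEdges σ := by rw [h, mem_permEdges]; simp
    rw [mem_permEdges] at h1 h2
    rcases h1 with h1 | h1
    · exact h1.symm
    · rcases h2 with h2 | h2
      · exact h2
      · have a : σ (σ v) = v := τ.injective (h1.trans hv)
        have b : τ (σ v) = v := σ.injective h2
        rw [a, b]
  obtain ⟨n, rfl⟩ := hxy.exists_nat_pow_eq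
  induction n with
  | zero => simpa using hx
  | succ n ih =>
    rw [pow_succ', Perm.mul_apply]
    exact step _ (ih ⟨n, by simp⟩)

/-- Flip `σ` on the components where `f` is false. -/
lemma exists_flip (σ : Perm V) (f : (gr (permEdges σ)).ConnectedComponent → Bool) :
    ∃ τ : Perm V, permEdges τ = permEdges σ ∧
      ∀ v, τ v = if f ((gr (permEdges σ)).connectedComponentMk v) then σ v else σ⁻¹ v := by
  have c1 : ∀ v, (gr (permEdges σ)).connectedComponentMk (σ v) =
      (gr (permEdges σ)).connectedComponentMk v := fun v =>
    SimpleGraph.ConnectedComponent.sound ((reachable_iff σ _ _).2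
      (sameCycle_apply_left.2 (SameCycle.refl _ _)))
  have c2 : ∀ v, (gr (permEdges σ)).connectedComponentMk (σ.symm v) =
      (gr (permEdges σ)).connectedComponentMk v := fun v => by
    rw [← c1 (σ.symm v), Equiv.apply_symm_apply]
  refine ⟨⟨fun v => if f ((gr (permEdges σ)).connectedComponentMk v) then σ v else σ⁻¹ v,
    fun v => if f ((gr (permEdges σ)).connectedComponentMk v) then σ⁻¹ v else σ v, ?_, ?_⟩,
    ?_, fun v => rfl⟩
  · intro v
    by_cases h : f ((gr (permEdges σ)).connectedComponentMk v) <;> simp [h, c1, c2]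
  · intro v
    by_cases h : f ((gr (permEdges σ)).connectedComponentMk v) <;> simp [h, c1, c2]
  · ext e
    induction e using Sym2.ind with
    | _ u v =>
    rw [mem_permEdges, mem_permEdges]
    simp only [Equiv.coe_fn_mk]
    constructor
    · rintro (h | h) <;> split_ifs at h <;> [left; right; right; left] <;>
        first | exact h | (rw [← h]; simp)
    · rintro (rfl | rfl)
      · by_cases h : f ((gr (permEdges σ)).connectedComponentMk u) <;> simp [h, c1]
      · by_cases h : f ((gr (permEdges σ)).connectedComponentMk v) <;> simp [h, c1]

lemma card_fiber (σ : Perm V) :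
    (univ.filter (fun τ : Perm V => permEdges τ = permEdges σ)).card =
      2 ^ cycleCompCount (permEdges σ) := by
  classical
  unfold cycleCompCount
  rw [← Fintype.card_subtype, Nat.card_eq_fintype_card, ← Fintype.card_bool, ← Fintype.card_fun]
  have out_eq : ∀ C : (gr (permEdges σ)).ConnectedComponent,
    (gr (permEdges σ)).connectedComponentMk (Quot.out C) = C := fun C => Quot.out_eq C
  apply Fintype.card_of_bijective (f := fun τ C => decide (τ.1 (Quot.out C.1) = σ (Quot.out C.1)))
  constructor
  · rintro ⟨τ, hτ⟩ ⟨ρ, hρ⟩ h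
    simp only [Subtype.mk.injEq]
    ext v
    have hh : permEdges τ = permEdges ρ := hτ.trans hρ.symm
    set C := (gr (permEdges σ)).connectedComponentMk v with hC
    have hv : s(v, τ v) ∈ permEdges ρ := by rw [← hh, mem_permEdges]; simp
    rw [mem_permEdges] at hv
    have nb : ∀ x, τ x = ρ x ∨ ρ (τ x) = x := by
      intro x
      have hv : s(x, τ x) ∈ permEdges ρ := by rw [← hh, mem_permEdges]; simp
      rw [mem_permEdges] at hv
      exact hv.imp Eq.symm id
    have hsc : ∀ x ∈ C.supp, τ.SameCycle x v := by
      intro x hx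
      rw [← reachable_iff, hτ]
      exact SimpleGraph.ConnectedComponent.exact hx
    by_cases hdeg : ∀ x ∈ C.supp, edgeDeg (permEdges σ) x = 2
    · have hC2 := congrFun h ⟨C, hdeg⟩
      simp only [decide_eq_decide] at hC2
      refine agree τ ρ hh (x := Quot.out C) ?_ (hsc _ (out_eq C))
      set x := Quot.out C
      have n1 : s(x, τ x) ∈ permEdges σ := by rw [← hτ, mem_permEdges]; simp
      have n2 : s(x, ρ x) ∈ permEdges σ := by rw [← hρ, mem_permEdges]; simp
      rw [mem_permEdges] at n1 n2
      by_cases ht : τ x = σ x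
      · rw [ht, hC2.1 ht]
      · have hr : ¬ ρ x = σ x := fun h => ht (hC2.2 h)
        have a := n1.resolve_left (fun h => ht h.symm)
        have b := n2.resolve_left (fun h => hr h.symm)
        exact σ.injective (a.trans b.symm)
    · push Not at hdeg
      obtain ⟨x, hx, hx2⟩ := hdeg
      refine agree τ ρ hh (x := x) ?_ (hsc _ hx)
      rw [← hρ, edgeDeg_permEdges] at hx2
      have : ρ (ρ x) = x := by
        by_contra h'
        simp [h'] at hx2
      rcases nb x with h1 | h1
      · exact h1
      · exact ρ.injective (h1.trans this.symm)
  · intro f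
    obtain ⟨τ, hτ, h⟩ := exists_flip σ (fun C => if hC : _ then f ⟨C, hC⟩ else true)
    refine ⟨⟨τ, hτ⟩, ?_⟩
    funext ⟨C, hC⟩
    simp only [h, out_eq, dif_pos hC]
    cases hf : f ⟨C, hC⟩
    · simp only [Bool.false_eq_true, if_false, decide_eq_false_iff_not]
      have := hC (Quot.out C) (out_eq C)
      rw [edgeDeg_permEdges] at this
      intro h'
      have h3 : σ (σ (Quot.out C)) = Quot.out C := by rw [← h']; simp
      simp [h3] at this
    · simp

/-- The other neighbour: an involution on neighbours. -/
lemma exists_oth (w : Sym2 V → ℝ) (Γ : Finset (Sym2 V)) (hΓ : IsSesqSpanning w Γ) :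
    ∃ oth : V → V → V, ∀ v u, s(v, u) ∈ Γ →
      s(v, oth v u) ∈ Γ ∧ oth v (oth v u) = u ∧ (∀ x, s(v, x) ∈ Γ → x = u ∨ x = oth v u) ∧
      (oth v u = u → edgeDeg Γ v = 1) ∧ (edgeDeg Γ v = 1 → oth v u = u) := by
  have key : ∀ v, ∃ o : V → V, ∀ u, s(v, u) ∈ Γ →
      s(v, o u) ∈ Γ ∧ o (o u) = u ∧ (∀ x, s(v, x) ∈ Γ → x = u ∨ x = o u) ∧
      (o u = u → edgeDeg Γ v = 1) ∧ (edgeDeg Γ v = 1 → o u = u) := by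
    intro v
    have hm : ∀ u, s(v, u) ∈ Γ ↔ u ∈ univ.filter (fun u => s(v, u) ∈ Γ) := by simp
    rcases hΓ.2.1 v with h | h
    · have h' := h
      rw [edgeDeg_eq, Finset.card_eq_one] at h'
      obtain ⟨a, ha⟩ := h'
      refine ⟨id, fun u hu => ⟨hu, rfl, fun x hx => ?_, fun _ => h, fun _ => rfl⟩⟩
      rw [hm, ha, mem_singleton] at hu hx
      simp [hu, hx]
    · have h' := h
      rw [edgeDeg_eq, Finset.card_eq_two] at h'
      obtain ⟨a, b, hab, ha⟩ := h'
      have hm' : ∀ u, s(v, u) ∈ Γ ↔ u = a ∨ u = b := by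
        intro u
        rw [hm, ha, mem_insert, mem_singleton]
      simp only [hm', h]
      refine ⟨fun x => if x = a then b else a, ?_⟩
      rintro u (rfl | rfl)
      · simp [hab.symm]
      · simp [hab.symm, hab]
  choose o ho using key
  exact ⟨o, ho⟩

lemma exists_perm (w : Sym2 V → ℝ) (Γ : Finset (Sym2 V)) (hΓ : IsSesqSpanning w Γ) :
    ∃ σ : Perm V, permEdges σ = Γ := by
  classical
  obtain ⟨oth, hoth⟩ := exists_oth w Γ hΓ
  have sw : ∀ {a b : V}, s(a, b) ∈ Γ → s(b, a) ∈ Γ := fun h => by rwa [Sym2.eq_swap]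
  have hne : ∀ {a b : V}, s(a, b) ∈ Γ → a ≠ b := by
    intro a b h hab
    exact (hΓ.1 _ h).1 (by simpa using hab)
  let D := {p : V × V // s(p.1, p.2) ∈ Γ}
  let rev : D → D := fun p => ⟨(p.1.2, p.1.1), sw p.2⟩
  let nx : D → D := fun p => ⟨(p.1.2, oth p.1.2 p.1.1), (hoth _ _ (sw p.2)).1⟩
  have hrr : ∀ p, rev (rev p) = p := fun p => rfl
  have hrn : ∀ p, rev (nx (rev (nx p))) = p := by
    rintro ⟨⟨a, b⟩, h⟩
    apply Subtype.ext
    exact Prod.ext (hoth _ _ (sw h)).2.1 rfl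
  let N : Perm D := ⟨nx, fun p => rev (nx (rev p)), hrn, fun p => by
    have := hrn (rev p)
    simpa [hrr] using congrArg rev this⟩
  have hN : ∀ p, N p = nx p := fun p => rfl
  have hNi : ∀ p, N⁻¹ p = rev (nx (rev p)) := fun p => rfl
  -- reversal conjugates
  have hconj : ∀ (n : ℕ) (p : D), (N ^ n) (rev ((N ^ n) p)) = rev p := by
    intro n
    induction n with
    | zero => intro p; rfl
    | succ n ih =>
      intro p
      have h1 : ∀ q, N (rev (N q)) = rev q := fun q => by
        have := congrArg rev (hrn q)
        rwa [hrr] at this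
      rw [pow_succ', Perm.mul_apply, Perm.mul_apply]
      have h2 := h1 ((N ^ n) p)
      rw [← Perm.mul_apply, ← pow_succ', pow_succ, Perm.mul_apply, h2, ih]
  have hdegnx : ∀ p : D, edgeDeg Γ p.1.1 = edgeDeg Γ p.1.2 := by
    rintro ⟨⟨a, b⟩, h⟩
    have h1 := hΓ.2.2 a b h
    have h2 := hΓ.2.2 b a (sw h)
    rcases hΓ.2.1 a with h3 | h3 <;> rcases hΓ.2.1 b with h4 | h4 <;> simp_all
  have hdegpow : ∀ (n : ℕ) (p : D), edgeDeg Γ ((N ^ n) p).1.1 = edgeDeg Γ p.1.1 := by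
    intro n p
    induction n with
    | zero => rfl
    | succ n ih =>
      rw [pow_succ', Perm.mul_apply, ← ih, hN]
      exact (hdegnx _).symm
  have hrevne : ∀ p : D, rev p ≠ p := by
    rintro ⟨⟨a, b⟩, h⟩ h'
    exact hne h (congrArg (fun q : D => q.1.2) h')
  have hrev : ∀ p : D, N.SameCycle p (rev p) → edgeDeg Γ p.1.1 = 1 := by
    intro p hp
    obtain ⟨k, hk⟩ := hp.exists_nat_pow_eq
    rcases Nat.even_or_odd' k with ⟨m, rfl | rfl⟩
    · exfalso
      rw [two_mul, pow_add, Perm.mul_apply, ← hconj m p] at hk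
      exact hrevne _ ((N ^ m).injective hk).symm
    · rw [show 2 * m + 1 = m + (m + 1) by ring, pow_add, Perm.mul_apply, ← hconj m p] at hk
      have h3 := (N ^ m).injective hk
      rw [pow_succ', Perm.mul_apply, hN] at h3
      rw [← hdegpow m p, hdegnx]
      have h4 := congrArg (fun q : D => q.1.2) h3
      exact (hoth _ _ (sw ((N ^ m) p).2)).2.2.2.1 h4
  have huniq : ∀ p q : D, N.SameCycle p q → p.1.1 = q.1.1 → p = q := by
    rintro ⟨⟨v, a⟩, hp⟩ ⟨⟨v', b⟩, hq⟩ hpq h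
    simp only at h
    subst h
    by_contra hab
    have hab : a ≠ b := fun h => hab (by subst h; rfl)
    have hb := ((hoth v a hp).2.2.1 b hq).resolve_left hab.symm
    have h1 : N (rev ⟨(v, a), hp⟩) = ⟨(v, b), hq⟩ := by
      rw [hN]
      apply Subtype.ext
      exact Prod.ext rfl hb.symm
    rw [← h1, sameCycle_apply_right] at hpq
    have h2 := (hoth v a hp).2.2.2.2 (hrev _ hpq)
    exact hab (by rw [hb, h2])
  -- choice of a dart in every component
  have hnb : ∀ v, ∃ u, s(v, u) ∈ Γ := by
    intro v
    have : 0 < edgeDeg Γ v := by rcases hΓ.2.1 v with h | h <;> omega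
    rw [edgeDeg_eq, Finset.card_pos] at this
    obtain ⟨u, hu⟩ := this
    exact ⟨u, by simpa using hu⟩
  choose nb hnb using hnb
  let dart : (gr Γ).ConnectedComponent → D := fun C => ⟨(Quot.out C, nb (Quot.out C)), hnb _⟩
  have hreach : ∀ (u v : V), (gr Γ).Reachable u v → ∀ p : D, p.1.1 = u →
      ∃ q : D, N.SameCycle p q ∧ q.1.1 = v := by
    rintro u v ⟨W⟩
    induction W with
    | nil => intro p hp; exact ⟨p, SameCycle.refl _ _, hp⟩
    | @cons u x v h W ih =>
      rintro ⟨⟨u', y⟩, hp⟩ hu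
      simp only at hu
      subst hu
      have hx : s(u', x) ∈ Γ := by
        simp only [SimpleGraph.fromEdgeSet_adj, mem_coe] at h
        exact h.1
      rcases (hoth u' y hp).2.2.1 x hx with h1 | h1
      · obtain ⟨q, hq, hqv⟩ := ih (N ⟨(u', y), hp⟩) h1.symm
        exact ⟨q, sameCycle_apply_left.1 hq, hqv⟩
      · obtain ⟨q, hq, hqv⟩ := ih (N⁻¹ ⟨(u', y), hp⟩) h1.symm
        refine ⟨q, ?_, hqv⟩
        refine SameCycle.trans ?_ hq
        refine sameCycle_apply_right.1 ?_
        have hself : N (N⁻¹ ⟨(u', y), hp⟩) = ⟨(u', y), hp⟩ := N.apply_symm_apply _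
        rw [hself]
  have hex : ∀ v, ∃ u, ∃ h : s(v, u) ∈ Γ,
      N.SameCycle (dart ((gr Γ).connectedComponentMk v)) ⟨(v, u), h⟩ := by
    intro v
    obtain ⟨⟨⟨v', u⟩, h⟩, hq, hv⟩ := hreach _ v
      (SimpleGraph.ConnectedComponent.exact
        (Quot.out_eq ((gr Γ).connectedComponentMk v))) (dart ((gr Γ).connectedComponentMk v)) rfl
    simp only at hv
    subst hv
    exact ⟨u, h, hq⟩
  choose f hf hfc using hex
  have hcomp : ∀ {a b}, s(a, b) ∈ Γ →
      (gr Γ).connectedComponentMk a = (gr Γ).connectedComponentMk b := by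
    intro a b h
    apply SimpleGraph.ConnectedComponent.sound
    apply SimpleGraph.Adj.reachable
    simp only [SimpleGraph.fromEdgeSet_adj, mem_coe]
    exact ⟨h, hne h⟩
  -- the predecessor property
  have hpred : ∀ u v, s(u, v) ∈ Γ → v = oth u (f u) → f v = u := by
    intro u v huv h
    have h1 := hfc u
    rw [hcomp huv] at h1
    have h2 : N.SameCycle ⟨(v, u), sw huv⟩ ⟨(u, f u), hf u⟩ := by
      have : N ⟨(v, u), sw huv⟩ = ⟨(u, f u), hf u⟩ := by
        apply Subtype.ext
        refine Prod.ext rfl ?_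
        change oth u v = f u
        rw [h, (hoth _ _ (hf u)).2.1]
      rw [← this]
      exact sameCycle_apply_right.2 (SameCycle.refl _ _)
    have h3 := huniq _ _ ((hfc v).symm.trans (h1.trans h2.symm)) rfl
    exact congrArg (fun q : D => q.1.2) h3
  have hedge : ∀ u v, s(u, v) ∈ Γ → f u = v ∨ f v = u := by
    intro u v huv
    rcases (hoth _ _ (hf u)).2.2.1 v huv with h | h
    · exact Or.inl h.symm
    · exact Or.inr (hpred u v huv h)
  have hsurj : Function.Surjective f := by
    intro u
    exact ⟨oth u (f u), hpred u _ (hoth _ _ (hf u)).1 rfl⟩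
  refine ⟨Equiv.ofBijective f ⟨Finite.injective_iff_surjective.2 hsurj, hsurj⟩, ?_⟩
  ext e
  induction e using Sym2.ind with
  | _ u v =>
  rw [mem_permEdges]
  change f u = v ∨ f v = u ↔ s(u, v) ∈ Γ
  constructor
  · rintro (rfl | rfl)
    · exact hf u
    · exact sw (hf v)
  · exact hedge u v

end Harary

end helpers

/-- **Corollary 1** (Harary's formula for weighted graphs).  Let `G` be a weighted graph
on a finite vertex set `V`, with weighted adjacency matrix `A` (symmetric, zero diagonal)
and edge-weight function `w` (so `w s(u,v) = A u v`).  Then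
`det A = ∑_{Γ ∈ S(G)} (-1)^{sg(Γ)} 2^{c(Γ)} ∏_{e ∈ P²(Γ)} w(e)² ∏_{e ∈ C(Γ)} w(e)`,
the sum running over all sesquivalent spanning subgraphs of `G`. -/
theorem det_eq_sum_sesquivalent_spanning {V : Type*} [Fintype V] [DecidableEq V]
    (A : Matrix V V ℝ)
    (hsym : ∀ u v : V, A u v = A v u) (hdiag : ∀ v : V, A v v = 0)
    (w : Sym2 V → ℝ) (hw : ∀ u v : V, w s(u, v) = A u v) :
    A.det = ∑ᶠ Γ ∈ {Γ : Finset (Sym2 V) | IsSesqSpanning w Γ},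
      (-1 : ℝ) ^ evenCompCount Γ * 2 ^ cycleCompCount Γ *
        (∏ e ∈ matchingEdges Γ, (w e) ^ 2) * (∏ e ∈ cycleEdges Γ, w e) := by
  classical
  have hd : ∀ v, w s(v, v) = 0 := fun v => by rw [hw, hdiag]
  have hset : {Γ : Finset (Sym2 V) | IsSesqSpanning w Γ} =
      ↑(univ.filter (fun Γ : Finset (Sym2 V) => IsSesqSpanning w Γ)) := by
    ext; simp
  rw [hset, finsum_mem_coe_finset, Matrix.det_apply]
  have hterm : ∀ σ : Equiv.Perm V, Equiv.Perm.sign σ • ∏ i, A (σ i) i =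
      ((Equiv.Perm.sign σ : ℤ) : ℝ) * ∏ i, w s(i, σ i) := by
    intro σ
    rw [Units.smul_def, zsmul_eq_mul]
    congr 1
    exact Finset.prod_congr rfl fun i _ => by rw [hw, hsym]
  rw [Finset.sum_congr rfl fun σ _ => hterm σ]
  rw [← Finset.sum_filter_of_ne (p := fun σ : Equiv.Perm V => ∀ i, w s(i, σ i) ≠ 0)
    (fun σ _ h i hi => h (by
      rw [Finset.prod_eq_zero (i := i) (mem_univ _) hi, mul_zero]))]
  rw [← Finset.sum_fiberwise_of_maps_to (g := Harary.permEdges)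
    (t := univ.filter (fun Γ : Finset (Sym2 V) => IsSesqSpanning w Γ))
    (fun σ hσ => by
      rw [mem_filter] at hσ ⊢
      exact ⟨mem_univ _, Harary.isSesq_permEdges w hd σ hσ.2⟩)]
  apply Finset.sum_congr rfl
  intro Γ hΓ
  have hΓ := (mem_filter.1 hΓ).2
  have hnz : ∀ σ : Equiv.Perm V, Harary.permEdges σ = Γ → ∀ i, w s(i, σ i) ≠ 0 := by
    rintro σ rfl i
    exact (hΓ.1 _ ((Harary.mem_permEdges σ _ _).2 (Or.inl rfl))).2
  have hfilt : ((univ.filter (fun σ : Equiv.Perm V => ∀ i, w s(i, σ i) ≠ 0)).filter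
      (fun σ => Harary.permEdges σ = Γ)) = univ.filter (fun σ => Harary.permEdges σ = Γ) := by
    ext σ
    simp only [mem_filter, mem_univ, true_and]
    exact ⟨fun h => h.2, fun h => ⟨hnz σ h, h⟩⟩
  rw [hfilt]
  have hval : ∀ σ ∈ univ.filter (fun σ : Equiv.Perm V => Harary.permEdges σ = Γ),
      ((Equiv.Perm.sign σ : ℤ) : ℝ) * ∏ i, w s(i, σ i) =
      (-1 : ℝ) ^ evenCompCount Γ *
        ((∏ e ∈ matchingEdges Γ, (w e) ^ 2) * (∏ e ∈ cycleEdges Γ, w e)) := by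
    intro σ hσ
    have hσ := (mem_filter.1 hσ).2
    have hfix : ∀ i, σ i ≠ i := by
      intro i hi
      have := hnz σ hσ i
      rw [hi] at this
      exact this (hd i)
    rw [Harary.sign_permEdges σ hfix, Harary.prod_permEdges w σ hfix, hσ]
  rw [Finset.sum_congr rfl hval, Finset.sum_const]
  obtain ⟨σ, rfl⟩ := Harary.exists_perm w Γ hΓ
  rw [Harary.card_fiber, nsmul_eq_mul]
  push_cast
  ring
end

section
/- Let $n \geq 3$ and let $C_n = v_1 v_2 \dots v_n v_1$ be a weighted cycle with weighted adjacency matrix $A$. Set $E_1(C_n) = \{v_{i-1}v_i : 2 \mid i,\ i \leq n\}$ and $E_2(C_n) = E(C_n) \setminus E_1(C_n)$. Then: (i) if $n$ is odd, $\det A = 2 \prod_{e \in E(C_n)} w(e)$; (ii) if $n \equiv 2 \pmod 4$, $\det A = -\left[\prod_{e \in E_1(C_n)} w(e) + \prod_{e \in E_2(C_n)} w(e)\right]^2$; (iii) if $4 \mid n$, $\det A = \left[\prod_{e \in E_1(C_n)} w(e) - \prod_{e \in E_2(C_n)} w(e)\right]^2$. -/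
/-- Adjacency matrix of the weighted cycle, without modular arithmetic. -/
def cycMat (n : ℕ) (w : ℕ → ℝ) : Matrix (Fin n) (Fin n) ℝ := fun i j =>
  if (i : ℕ) + 1 = j then w i
  else if (j : ℕ) + 1 = i then w j
  else if (j : ℕ) = 0 ∧ (i : ℕ) + 1 = n then w i
  else if (i : ℕ) = 0 ∧ (j : ℕ) + 1 = n then w j else 0

lemma cycMat_three (w : ℕ → ℝ) : (cycMat 3 w).det = 2 * (w 0 * w 1 * w 2) := by
  rw [Matrix.det_fin_three]
  simp [cycMat]
  ring

lemma cycMat_four (w : ℕ → ℝ) : (cycMat 4 w).det = (w 0 * w 2 - w 1 * w 3) ^ 2 := by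
  have h : cycMat 4 w = !![0, w 0, 0, w 3; w 0, 0, w 1, 0; 0, w 1, 0, w 2; w 3, 0, w 2, 0] := by
    ext i j
    fin_cases i <;> fin_cases j <;> simp [cycMat]
  rw [h, Matrix.det_succ_row_zero]
  simp [Fin.sum_univ_succ, Matrix.det_fin_three, Matrix.submatrix, Fin.succAbove]
  ring

lemma cycMat_step (m : ℕ) (hm : 3 ≤ m) (w : ℕ → ℝ) (hw : w m ≠ 0) :
    (cycMat (m + 2) w).det = -(w m) ^ 2 *
      (cycMat m (Function.update w (m - 1) (-(w (m - 1) * w (m + 1) / w m)))).det := by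
  let A : Matrix (Fin m) (Fin m) ℝ := fun i j =>
    if (i : ℕ) + 1 = j then w i else if (j : ℕ) + 1 = i then w j else 0
  let B : Matrix (Fin m) (Fin 2) ℝ := fun i j =>
    if j = 0 then (if (i : ℕ) + 1 = m then w (m - 1) else 0)
    else (if (i : ℕ) = 0 then w (m + 1) else 0)
  let D : Matrix (Fin 2) (Fin 2) ℝ := !![0, w m; w m, 0]
  let E : Matrix (Fin 2) (Fin 2) ℝ := !![0, (w m)⁻¹; (w m)⁻¹, 0]
  have hDE : D * E = 1 := by
    ext i j
    fin_cases i <;> fin_cases j <;> simp [D, E, hw]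
  let _ : Invertible D := ⟨E, mul_eq_one_comm.1 hDE, hDE⟩
  have hinv : ⅟D = E := rfl
  have hblock : (cycMat (m + 2) w).submatrix finSumFinEquiv finSumFinEquiv
      = Matrix.fromBlocks A B B.transpose D := by
    ext i j
    rcases i with i | i <;> rcases j with j | j
    · change cycMat (m + 2) w (Fin.castAdd 2 i) (Fin.castAdd 2 j) = A i j
      have := i.2
      have := j.2
      simp only [cycMat, A, Fin.val_castAdd]
      grind
    · change cycMat (m + 2) w (Fin.castAdd 2 i) (Fin.natAdd m j) = B i j
      have := i.2
      fin_cases j <;> simp [cycMat, B] <;> grind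
    · change cycMat (m + 2) w (Fin.natAdd m i) (Fin.castAdd 2 j) = B j i
      have := j.2
      fin_cases i <;> simp [cycMat, B] <;> grind
    · change cycMat (m + 2) w (Fin.natAdd m i) (Fin.natAdd m j) = D i j
      have : m ≠ 0 := by omega
      fin_cases i <;> fin_cases j <;> simp [cycMat, D, this] <;> omega
  rw [← Matrix.det_submatrix_equiv_self finSumFinEquiv, hblock, Matrix.det_fromBlocks₂₂, hinv]
  have hD : D.det = -(w m) ^ 2 := by simp [D, Matrix.det_fin_two]; ring
  rw [hD]
  congr 2
  ext i j
  have := i.2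
  have := j.2
  simp only [Matrix.sub_apply, Matrix.mul_apply, Fin.sum_univ_two, Matrix.transpose_apply]
  simp only [cycMat, A, B, E, Function.update_apply]
  simp
  by_cases h1 : (i : ℕ) = 0 <;> by_cases h2 : (j : ℕ) = 0 <;>
    by_cases h3 : (i : ℕ) + 1 = m <;> by_cases h4 : (j : ℕ) + 1 = m <;> grind

lemma cyc_odd (k : ℕ) : ∀ w : ℕ → ℝ, (∀ i < 2 * k + 3, w i ≠ 0) →
    (cycMat (2 * k + 3) w).det = 2 * ∏ i ∈ Finset.range (2 * k + 3), w i := by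
  induction k with
  | zero => intro w _; simp [cycMat_three, Finset.prod_range_succ]
  | succ k ih =>
    intro w hw
    have hc : w (2 * k + 3) ≠ 0 := hw _ (by omega)
    have h1 := hw (2 * k + 2) (by omega)
    have h2 := hw (2 * k + 4) (by omega)
    rw [show 2 * (k + 1) + 3 = (2 * k + 3) + 2 by ring, cycMat_step _ (by omega) w hc, ih]
    · simp only [Finset.prod_range_succ _ (2 * k + 2), Finset.prod_range_succ _ (2 * k + 3),
        Finset.prod_range_succ _ (2 * k + 3 + 1), show 2 * k + 3 - 1 = 2 * k + 2 by omega,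
        Function.update_self]
      rw [Finset.prod_congr rfl (g := w)]
      · field_simp
      · intro x hx
        rw [Function.update_of_ne]
        have := Finset.mem_range.1 hx
        omega
    · intro i hi
      rw [Function.update_apply]
      split_ifs
      · simp [h1, h2, hc]
      · exact hw i (by omega)

lemma cyc_even (k : ℕ) : ∀ w : ℕ → ℝ, (∀ i < 2 * k + 4, w i ≠ 0) →
    (cycMat (2 * k + 4) w).det = (-1) ^ k * ((∏ i ∈ Finset.range (k + 2), w (2 * i)) -
      (-1) ^ k * ∏ i ∈ Finset.range (k + 2), w (2 * i + 1)) ^ 2 := by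
  induction k with
  | zero => intro w _; simp [cycMat_four, Finset.prod_range_succ]
  | succ k ih =>
    intro w hw
    have hc : w (2 * k + 4) ≠ 0 := hw _ (by omega)
    have h1 := hw (2 * k + 3) (by omega)
    have h2 := hw (2 * k + 5) (by omega)
    rw [show 2 * (k + 1) + 4 = (2 * k + 4) + 2 by ring, cycMat_step _ (by omega) w hc, ih]
    · have e1 : ∏ i ∈ Finset.range (k + 2), Function.update w (2 * k + 4 - 1)
          (-(w (2 * k + 4 - 1) * w (2 * k + 4 + 1) / w (2 * k + 4))) (2 * i)
          = ∏ i ∈ Finset.range (k + 2), w (2 * i) := by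
        refine Finset.prod_congr rfl fun x hx => ?_
        rw [Function.update_of_ne]
        omega
      have e2 : ∏ i ∈ Finset.range (k + 1), Function.update w (2 * k + 4 - 1)
          (-(w (2 * k + 4 - 1) * w (2 * k + 4 + 1) / w (2 * k + 4))) (2 * i + 1)
          = ∏ i ∈ Finset.range (k + 1), w (2 * i + 1) := by
        refine Finset.prod_congr rfl fun x hx => ?_
        rw [Function.update_of_ne]
        have := Finset.mem_range.1 hx
        omega
      have e3 := Finset.prod_range_succ (fun i => Function.update w (2 * k + 4 - 1)
          (-(w (2 * k + 4 - 1) * w (2 * k + 4 + 1) / w (2 * k + 4))) (2 * i + 1)) (k + 1)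
      rw [e1, e3, e2, show k + 1 + 2 = (k + 2) + 1 by ring,
        Finset.prod_range_succ _ (k + 2), Finset.prod_range_succ _ (k + 2),
        Finset.prod_range_succ (fun i => w (2 * i + 1)) (k + 1)]
      simp only [show 2 * k + 4 - 1 = 2 * k + 3 by omega, show 2 * (k + 1) + 1 = 2 * k + 3 by ring,
        show 2 * (k + 2) = 2 * k + 4 by ring, Function.update_self, pow_succ (-1 : ℝ) k]
      field_simp
    · intro i hi
      rw [Function.update_apply]
      split_ifs
      · simp [h1, h2, hc]
      · exact hw i (by omega)

lemma E1_eq (k : ℕ) (w : ℕ → ℝ) :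
    ∏ i ∈ (Finset.range (2 * k + 4 - 1)).filter (fun k => Even k), w i =
      ∏ i ∈ Finset.range (k + 2), w (2 * i) := by
  symm
  refine Finset.prod_nbij (fun i => 2 * i) ?_ ?_ ?_ (fun _ _ => rfl)
  · intro i hi
    simp at hi ⊢
    omega
  · intro a _ b _ h
    simpa using h
  · intro x hx
    simp at hx
    obtain ⟨h, r, rfl⟩ := hx
    refine ⟨r, ?_, by simp; ring⟩
    simp
    omega

lemma E2_eq (k : ℕ) (w : ℕ → ℝ) :
    ∏ i ∈ Finset.range (2 * k + 4) \ (Finset.range (2 * k + 4 - 1)).filter (fun k => Even k), w i =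
      ∏ i ∈ Finset.range (k + 2), w (2 * i + 1) := by
  symm
  refine Finset.prod_nbij (fun i => 2 * i + 1) ?_ ?_ ?_ (fun _ _ => rfl)
  · intro i hi
    simp at hi ⊢
    omega
  · intro a _ b _ h
    simpa using h
  · intro x hx
    simp [Nat.even_iff] at hx
    refine ⟨x / 2, ?_, ?_⟩
    · simp
      omega
    · simp
      omega


/-- **Corollary 5** (determinant of a weighted cycle).  Let `n ≥ 3` and let
`Cₙ = v₁v₂…vₙv₁` be a weighted cycle: vertex `vᵢ` is position `i-1 : Fin n`, and for
each `k < n` the edge joining positions `k` and `(k+1) % n` carries the nonzero weight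
`w k` (so `w (n-1)` is the weight of `vₙv₁`).  The weighted adjacency matrix `A` is the
symmetric matrix with zero diagonal whose only nonzero entries are these weights.
With `E₁ = {v_{i-1}vᵢ : 2 ∣ i, i ≤ n}` (0-indexed: the even `k < n - 1`) and
`E₂ = E(Cₙ) \ E₁`:
(i) if `n` is odd then `det A = 2 ∏_{e ∈ E(Cₙ)} w e`;
(ii) if `n ≡ 2 (mod 4)` then `det A = -(∏_{E₁} w + ∏_{E₂} w)^2`;
(iii) if `4 ∣ n` then `det A = (∏_{E₁} w - ∏_{E₂} w)^2`. -/
theorem det_weighted_cycle (n : ℕ) (hn : 3 ≤ n)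
    (w : ℕ → ℝ) (hw : ∀ k : ℕ, k < n → w k ≠ 0)
    (A : Matrix (Fin n) (Fin n) ℝ)
    (hA : ∀ i j : Fin n,
      A i j = if ((i : ℕ) + 1) % n = (j : ℕ) then w i
              else if ((j : ℕ) + 1) % n = (i : ℕ) then w j else 0) :
    (Odd n → A.det = 2 * ∏ k ∈ Finset.range n, w k) ∧
    (n % 4 = 2 → A.det =
      -((∏ k ∈ (Finset.range (n - 1)).filter (fun k => Even k), w k) +
        (∏ k ∈ Finset.range n \ (Finset.range (n - 1)).filter (fun k => Even k), w k)) ^ 2) ∧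
    (n % 4 = 0 → A.det =
      ((∏ k ∈ (Finset.range (n - 1)).filter (fun k => Even k), w k) -
       (∏ k ∈ Finset.range n \ (Finset.range (n - 1)).filter (fun k => Even k), w k)) ^ 2) := by


  have hAc : A = cycMat n w := by
    ext i j
    have hi := i.2
    have hj := j.2
    have hmod : ∀ x : ℕ, x < n → (x + 1) % n = if x + 1 = n then 0 else x + 1 := by
      intro x hx
      split_ifs with h
      · rw [h, Nat.mod_self]
      · exact Nat.mod_eq_of_lt (by omega)
    rw [hA, hmod _ hi, hmod _ hj]
    simp only [cycMat]
    grind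
  subst hAc
  refine ⟨fun h => ?_, fun h => ?_, fun h => ?_⟩
  · obtain ⟨k, rfl⟩ : ∃ k, n = 2 * k + 3 := by
      obtain ⟨r, hr⟩ := h
      exact ⟨r - 1, by omega⟩
    exact cyc_odd k w hw
  · obtain ⟨k, rfl⟩ : ∃ k, n = 2 * k + 4 := ⟨(n - 4) / 2, by omega⟩
    rw [cyc_even k w hw, E1_eq, E2_eq, Odd.neg_one_pow (Nat.odd_iff.2 (by omega))]
    ring
  · obtain ⟨k, rfl⟩ : ∃ k, n = 2 * k + 4 := ⟨(n - 4) / 2, by omega⟩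
    rw [cyc_even k w hw, E1_eq, E2_eq, Even.neg_one_pow (Nat.even_iff.2 (by omega))]
    ring
end

section
/- Fix integers $n, m \geq 1$ and a natural number $x$. Let $A$ be the weighted adjacency matrix of the hexagonal grid $H_{n,m}$ in which the edge $v_{2i}^1 v_{2i+1}^1$ has weight $(x+i)/i$ for each $i \in \{1, \dots, n\}$ and every other edge has weight $1$. Then $\det A = (-1)^{nm+n+m} \binom{x+n+m}{n}^2$. -/
/-- A pair `p = (i, j)` is a vertex `vⱼⁱ` of the hexagonal grid `H_{n,m}`: either
`1 ≤ i ≤ m` and `1 ≤ j ≤ 2n+2` (rows `1, …, m` are paths on `2n+2` vertices), or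
`i = m+1` and `2 ≤ j ≤ 2n+1` (row `m+1` is a path on `2n` vertices). -/
def hexVertex (n m : ℕ) (p : ℕ × ℕ) : Prop :=
  (1 ≤ p.1 ∧ p.1 ≤ m ∧ 1 ≤ p.2 ∧ p.2 ≤ 2 * n + 2) ∨
  (p.1 = m + 1 ∧ 2 ≤ p.2 ∧ p.2 ≤ 2 * n + 1)

instance (n m : ℕ) : DecidablePred (hexVertex n m) := fun p => by
  unfold hexVertex; infer_instance

/-- The vertex set of the hexagonal grid `H_{n,m}` as a finite set of pairs. -/
def hexVerts (n m : ℕ) : Finset (ℕ × ℕ) :=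
  (Finset.range (m + 2) ×ˢ Finset.range (2 * n + 3)).filter (hexVertex n m)

/-- Adjacency in the hexagonal grid `H_{n,m}` (for pairs `(row, column)` belonging to
the vertex set): horizontal edges `vⱼⁱ v_{j+1}ⁱ` between consecutive columns of the same
row, and vertical edges `v₂^{i+1} v₁ⁱ` and `v_{2k+1}^{i+1} v_{2k+2}ⁱ` for `1 ≤ k ≤ n`. -/
def hexAdj (n : ℕ) (p q : ℕ × ℕ) : Prop :=
  (p.1 = q.1 ∧ (p.2 + 1 = q.2 ∨ q.2 + 1 = p.2)) ∨
  (p.1 = q.1 + 1 ∧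
    ((q.2 = 1 ∧ p.2 = 2) ∨ ∃ k, 1 ≤ k ∧ k ≤ n ∧ q.2 = 2 * k + 2 ∧ p.2 = 2 * k + 1)) ∨
  (q.1 = p.1 + 1 ∧
    ((p.2 = 1 ∧ q.2 = 2) ∨ ∃ k, 1 ≤ k ∧ k ≤ n ∧ p.2 = 2 * k + 2 ∧ q.2 = 2 * k + 1))

/-- The weight of an edge `{p, q}` of the weighted hexagonal grid of Theorem 2: the
edge `v_{2i}¹ v_{2i+1}¹` (row 1, columns `2i` and `2i+1`) has weight `(x+i)/i` for
`1 ≤ i ≤ n`, and every other edge has weight `1`.  (When the first condition holds,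
`min p.2 q.2 = 2i`, so `(min p.2 q.2)/2 = i`.) -/
noncomputable def hexWeight (n x : ℕ) (p q : ℕ × ℕ) : ℝ :=
  open scoped Classical in
  if ∃ i, 1 ≤ i ∧ i ≤ n ∧
      ((p = (1, 2 * i) ∧ q = (1, 2 * i + 1)) ∨ (q = (1, 2 * i) ∧ p = (1, 2 * i + 1)))
  then ((x : ℝ) + ((min p.2 q.2 / 2 : ℕ) : ℝ)) / ((min p.2 q.2 / 2 : ℕ) : ℝ)
  else 1

/-- The weighted adjacency matrix of the hexagonal grid `H_{n,m}` with the weights (*)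
of Theorem 2, indexed by its vertices. -/
noncomputable def hexWMatrix (n m x : ℕ) :
    Matrix {p // p ∈ hexVerts n m} {p // p ∈ hexVerts n m} ℝ :=
  open scoped Classical in
  fun p q => if hexAdj n p.1 q.1 then hexWeight n x p.1 q.1 else 0

open Matrix

/-- Path-weight matrix on the rectangular grid. -/
noncomputable def gridM (n m x : ℕ) :
    Matrix (Fin (m + 1) × Fin (n + 1)) (Fin (m + 1) × Fin (n + 1)) ℝ := fun p q =>
  if q.1.val = p.1.val ∧ q.2.val = p.2.val then 1
  else if q.1.val = p.1.val + 1 ∧ q.2.val = p.2.val then 1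
  else if q.1.val = p.1.val ∧ q.2.val = p.2.val + 1 then
    (if p.1.val = 0 then ((x : ℝ) + (q.2.val : ℝ)) / (q.2.val : ℝ) else 1)
  else 0

theorem gridM_det (n m x : ℕ) : (gridM n m x).det = 1 := by
  have hbt : (gridM n m x).BlockTriangular (fun p => p.1.val + p.2.val) := by
    intro p q h
    simp only [gridM] at h ⊢
    split_ifs <;> first | rfl | omega
  rw [hbt.det]
  apply Finset.prod_eq_one
  intro a _
  have : (gridM n m x).toSquareBlock (fun p => p.1.val + p.2.val) a = 1 := by
    ext ⟨p, hp⟩ ⟨q, hq⟩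
    simp only [Matrix.toSquareBlock_def, Matrix.of_apply, Matrix.one_apply, gridM,
      Subtype.mk.injEq, Prod.ext_iff, Fin.ext_iff]
    split_ifs <;> first | rfl | omega
  rw [this, Matrix.det_one]

/-- The row vector solving `h M = e₀`. -/
noncomputable def gridH (n m x : ℕ) (p : Fin (m + 1) × Fin (n + 1)) : ℝ :=
  (-1) ^ (p.1.val + p.2.val) * ((x + p.1.val + p.2.val).choose p.2.val : ℝ)

theorem gridH_mul (n m x : ℕ) :
    Matrix.vecMul (gridH n m x) (gridM n m x) = Pi.single ((0, 0)) 1 := by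
  ext ⟨i, k⟩
  rw [Matrix.vecMul, dotProduct]
  have key : ∀ p : Fin (m + 1) × Fin (n + 1), gridH n m x p * gridM n m x p (i, k) =
      (if p = (i, k) then gridH n m x (i, k) else 0)
      + (if i.val = p.1.val + 1 ∧ k.val = p.2.val then gridH n m x p else 0)
      + (if i.val = p.1.val ∧ k.val = p.2.val + 1 then gridH n m x p *
          (if i.val = 0 then ((x : ℝ) + (k.val : ℝ)) / (k.val : ℝ) else 1) else 0) := by
    rintro ⟨a, b⟩
    simp only [gridM, Prod.ext_iff, Fin.ext_iff]
    split_ifs <;> first | omega | simp_all [gridH]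
  rw [Finset.sum_congr rfl fun p _ => key p, Finset.sum_add_distrib, Finset.sum_add_distrib]
  have h1 : ∑ p : Fin (m + 1) × Fin (n + 1),
      (if p = (i, k) then gridH n m x (i, k) else 0) = gridH n m x (i, k) := by simp
  have h2 : ∑ p : Fin (m + 1) × Fin (n + 1),
      (if i.val = p.1.val + 1 ∧ k.val = p.2.val then gridH n m x p else 0) =
      if i.val = 0 then 0 else
        (-1) ^ (i.val - 1 + k.val) * ((x + (i.val - 1) + k.val).choose k.val : ℝ) := by
    by_cases hi : i.val = 0
    · rw [if_pos hi]
      apply Finset.sum_eq_zero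
      intro p _
      rw [if_neg (by omega)]
    · rw [if_neg hi, Finset.sum_eq_single (⟨i.val - 1, by omega⟩, k)]
      · rw [if_pos (by simp; omega)]
        simp [gridH]
      · rintro ⟨a, b⟩ _ hne
        rw [if_neg]
        simp only [ne_eq, Prod.ext_iff, Fin.ext_iff] at hne
        simp only
        omega
      · simp
  have h3 : ∑ p : Fin (m + 1) × Fin (n + 1),
      (if i.val = p.1.val ∧ k.val = p.2.val + 1 then gridH n m x p *
          (if i.val = 0 then ((x : ℝ) + (k.val : ℝ)) / (k.val : ℝ) else 1) else 0) =
      if k.val = 0 then 0 else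
        (-1) ^ (i.val + (k.val - 1)) * ((x + i.val + (k.val - 1)).choose (k.val - 1) : ℝ) *
         (if i.val = 0 then ((x : ℝ) + (k.val : ℝ)) / (k.val : ℝ) else 1) := by
    by_cases hk : k.val = 0
    · rw [if_pos hk]
      apply Finset.sum_eq_zero
      intro p _
      rw [if_neg (by omega)]
    · rw [if_neg hk, Finset.sum_eq_single (i, ⟨k.val - 1, by omega⟩)]
      · rw [if_pos (by simp; omega)]
        simp [gridH]
      · rintro ⟨a, b⟩ _ hne
        rw [if_neg]
        simp only [ne_eq, Prod.ext_iff, Fin.ext_iff] at hne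
        simp only
        omega
      · simp
  rw [h1, h2, h3]
  obtain ⟨i, hi⟩ := i
  obtain ⟨k, hk⟩ := k
  simp only [gridH, Pi.single_apply, Prod.ext_iff, Fin.ext_iff, Fin.val_zero]
  rcases i with _ | i <;> rcases k with _ | k
  · simp
  · have hc : ((x + (k + 1)).choose (k + 1) : ℝ) * ((k : ℝ) + 1) =
        ((x : ℝ) + (k + 1)) * ((x + k).choose k : ℝ) := by
      have := Nat.add_one_mul_choose_eq (x + k) k
      have h := congrArg (Nat.cast (R := ℝ)) this
      push_cast at h
      rw [← add_assoc x k 1]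
      linarith
    have hk0 : (k : ℝ) + 1 ≠ 0 := by positivity
    simp
    rw [pow_succ]
    field_simp
    linear_combination (-1) * (-1) ^ k * hc
  · simp [pow_succ]
  · have hc : ((x + (i + 1) + (k + 1)).choose (k + 1) : ℝ) =
        ((x + (i + 1) + k).choose k : ℝ) + ((x + i + (k + 1)).choose (k + 1) : ℝ) := by
      have h := Nat.choose_succ_succ (x + (i + 1) + k) k
      have e : x + i + (k + 1) = x + (i + 1) + k := by ring
      rw [e]
      exact_mod_cast h
    simp
    rw [hc]
    ring

theorem gridM_inv_entry (n m x : ℕ) :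
    (gridM n m x)⁻¹ (0, 0) (Fin.last m, Fin.last n) =
      (-1) ^ (m + n) * ((x + m + n).choose n : ℝ) := by
  have hu : IsUnit (gridM n m x).det := by rw [gridM_det]; exact isUnit_one
  have h := congrArg (fun v => Matrix.vecMul v (gridM n m x)⁻¹) (gridH_mul n m x)
  simp only [Matrix.vecMul_vecMul, Matrix.mul_nonsing_inv _ hu, Matrix.vecMul_one,
    Matrix.single_one_vecMul] at h
  have := congrFun h (Fin.last m, Fin.last n)
  simp only [gridH, Fin.val_last] at this
  rw [this]
  rfl

theorem det_antidiag {G : Type*} [Fintype G] [DecidableEq G] (M N : Matrix G G ℝ) :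
    (fromBlocks 0 M N 0).det = (-1) ^ Fintype.card G * (M.det * N.det) := by
  have h1 : fromBlocks 0 M N 0 = fromBlocks M 0 0 N * fromBlocks 0 1 1 0 := by
    simp [fromBlocks_multiply]
  have h2 : (fromBlocks 0 1 1 0 : Matrix (G ⊕ G) (G ⊕ G) ℝ) * fromBlocks 1 0 1 1 =
      fromBlocks 1 1 1 0 := by
    simp [fromBlocks_multiply]
  have h3 := congrArg Matrix.det h2
  rw [det_mul, det_fromBlocks_zero₁₂, det_fromBlocks_one₁₁] at h3
  simp [Matrix.det_neg] at h3
  rw [h1, det_mul, det_fromBlocks_zero₁₂, h3]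
  ring

/-- Jacobi's complementary minor identity. -/
theorem jacobi_minor {W : Type*} [Fintype W] [DecidableEq W] (K Y : Matrix W W ℝ)
    (h : K * Y = 1) (p : W → Prop) [DecidablePred p] :
    K.det * (toSquareBlockProp Y p).det = (toSquareBlockProp K fun i => ¬ p i).det := by
  obtain ⟨Z, hZ⟩ : ∃ Z : Matrix W W ℝ, ∀ a b, Z a b =
      if p b then Y a b else (1 : Matrix W W ℝ) a b := ⟨fun a b => _, fun _ _ => rfl⟩
  have hKZ : ∀ a b, (K * Z) a b = if p b then (1 : Matrix W W ℝ) a b else K a b := by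
    intro a b
    by_cases hb : p b
    · rw [if_pos hb, ← h]
      simp only [Matrix.mul_apply, hZ, hb, if_true]
    · simp only [hb, if_false]
      conv_rhs => rw [← Matrix.mul_one K]
      simp only [Matrix.mul_apply, hZ, hb, if_false]
  have d1 : (K * Z).det = (toSquareBlockProp K fun i => ¬ p i).det := by
    rw [twoBlockTriangular_det (K * Z) p]
    · have e1 : toSquareBlockProp (K * Z) p = 1 := by
        ext ⟨a, ha⟩ ⟨b, hb⟩
        simp [toSquareBlockProp_def, hKZ, hb, Matrix.one_apply]
      have e2 : toSquareBlockProp (K * Z) (fun i => ¬ p i) =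
          toSquareBlockProp K (fun i => ¬ p i) := by
        ext ⟨a, ha⟩ ⟨b, hb⟩
        simp [toSquareBlockProp_def, hKZ, hb]
      rw [e1, e2, det_one, one_mul]
    · intro i hi j hj
      rw [hKZ, if_pos hj, Matrix.one_apply_ne]
      rintro rfl
      exact hi hj
  have d2 : Z.det = (toSquareBlockProp Y p).det := by
    rw [twoBlockTriangular_det' Z p]
    · have e1 : toSquareBlockProp Z (fun i => ¬ p i) = 1 := by
        ext ⟨a, ha⟩ ⟨b, hb⟩
        simp [toSquareBlockProp_def, hZ, hb, Matrix.one_apply]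
      have e2 : toSquareBlockProp Z p = toSquareBlockProp Y p := by
        ext ⟨a, ha⟩ ⟨b, hb⟩
        simp [toSquareBlockProp_def, hZ, hb]
      rw [e1, e2, det_one, mul_one]
    · intro i hi j hj
      simp only [hZ, if_neg hj]
      rw [Matrix.one_apply_ne]
      rintro rfl
      exact hj hi
  rw [← d1, det_mul, d2]

theorem det_two_block {W : Type*} [Fintype W] [DecidableEq W] (Y : Matrix W W ℝ) (u v : W)
    (huv : u ≠ v) :
    (toSquareBlockProp Y (fun a => a = u ∨ a = v)).det = Y u u * Y v v - Y u v * Y v u := by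
  let f : Fin 2 → {a // a = u ∨ a = v} := ![⟨u, Or.inl rfl⟩, ⟨v, Or.inr rfl⟩]
  have hf : Function.Bijective f := by
    constructor
    · intro a b hab
      fin_cases a <;> fin_cases b <;> simp_all [f]
    · rintro ⟨a, rfl | rfl⟩
      · exact ⟨0, rfl⟩
      · exact ⟨1, rfl⟩
  rw [← det_submatrix_equiv_self (Equiv.ofBijective f hf), det_fin_two]
  simp [toSquareBlockProp_def, f]

/-- Coordinates: even columns on the left, odd columns on the right. -/
def hexPhi (n m : ℕ) :
    (Fin (m + 1) × Fin (n + 1)) ⊕ (Fin (m + 1) × Fin (n + 1)) → ℕ × ℕ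
  | Sum.inl p => (p.1.val + 1, 2 * p.2.val + 2)
  | Sum.inr p => if p.2.val = 0 then (p.1.val, 1) else (p.1.val + 1, 2 * p.2.val + 1)

theorem hexPhi_injective (n m : ℕ) : Function.Injective (hexPhi n m) := by
  rintro (⟨a, b⟩ | ⟨a, b⟩) (⟨c, d⟩ | ⟨c, d⟩) h <;> simp only [hexPhi] at h <;>
    (try split_ifs at h) <;> simp only [Prod.mk.injEq] at h <;>
    simp only [Sum.inl.injEq, Sum.inr.injEq, reduceCtorEq, Prod.mk.injEq, Fin.ext_iff] <;> omega

/-- The two removed vertices. -/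
def hexBad (n m : ℕ) (a : (Fin (m + 1) × Fin (n + 1)) ⊕ (Fin (m + 1) × Fin (n + 1))) : Prop :=
  a = Sum.inl (Fin.last m, Fin.last n) ∨ a = Sum.inr (0, 0)

instance (n m : ℕ) : DecidablePred (hexBad n m) := fun a => by
  unfold hexBad; infer_instance

theorem mem_hexVerts (n m : ℕ) (p : ℕ × ℕ) : p ∈ hexVerts n m ↔ hexVertex n m p := by
  simp only [hexVerts, Finset.mem_filter, Finset.mem_product, Finset.mem_range, hexVertex]
  constructor
  · exact fun h => h.2
  · intro h
    refine ⟨?_, h⟩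
    omega

theorem hexPhi_mem (n m : ℕ) (a) : hexPhi n m a ∈ hexVerts n m ↔ ¬ hexBad n m a := by
  rw [mem_hexVerts]
  rcases a with ⟨⟨a, ha⟩, ⟨b, hb⟩⟩ | ⟨⟨a, ha⟩, ⟨b, hb⟩⟩
  · simp only [hexPhi, hexVertex, hexBad, Sum.inl.injEq, reduceCtorEq, Prod.mk.injEq,
      Fin.ext_iff, Fin.val_last, or_false]
    omega
  · simp only [hexPhi, hexVertex, hexBad, Sum.inr.injEq, reduceCtorEq, Prod.mk.injEq,
      Fin.ext_iff, Fin.val_zero, false_or]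
    split_ifs <;> simp only <;> omega

theorem hexPhi_surj (n m : ℕ) (p : ℕ × ℕ) (hp : p ∈ hexVerts n m) :
    ∃ a, hexPhi n m a = p := by
  rw [mem_hexVerts] at hp
  obtain ⟨i, j⟩ := p
  simp only [hexVertex] at hp
  rcases Nat.even_or_odd' j with ⟨k, rfl | rfl⟩
  · refine ⟨Sum.inl (⟨i - 1, by omega⟩, ⟨k - 1, by omega⟩), ?_⟩
    simp only [hexPhi, Prod.mk.injEq]
    omega
  · by_cases hk : k = 0
    · refine ⟨Sum.inr (⟨i, by omega⟩, ⟨0, by omega⟩), ?_⟩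
      simp [hexPhi, hk]
    · refine ⟨Sum.inr (⟨i - 1, by omega⟩, ⟨k, by omega⟩), ?_⟩
      simp only [hexPhi, if_neg hk, Prod.mk.injEq]
      exact ⟨by omega, trivial⟩

noncomputable def hexEquiv (n m : ℕ) :
    {a // ¬ hexBad n m a} ≃ {p // p ∈ hexVerts n m} :=
  Equiv.ofBijective (fun a => ⟨hexPhi n m a.1, (hexPhi_mem n m a.1).2 a.2⟩) <| by
    constructor
    · intro a b h
      exact Subtype.ext (hexPhi_injective n m (congrArg Subtype.val h))
    · rintro ⟨p, hp⟩
      obtain ⟨a, rfl⟩ := hexPhi_surj n m p hp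
      exact ⟨⟨a, (hexPhi_mem n m a).1 hp⟩, rfl⟩

open scoped Classical in
/-- The entry function of the adjacency matrix on arbitrary pairs. -/
noncomputable def hexEntry (n x : ℕ) (p q : ℕ × ℕ) : ℝ :=
  if hexAdj n p q then hexWeight n x p q else 0

theorem hexAdj_symm (n : ℕ) (p q : ℕ × ℕ) : hexAdj n p q ↔ hexAdj n q p := by
  unfold hexAdj
  constructor <;> rintro (h | h | h)
  all_goals first
    | exact Or.inl ⟨h.1.symm, h.2.symm⟩
    | exact Or.inr (Or.inl h)
    | exact Or.inr (Or.inr h)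

theorem hexWeight_symm (n x : ℕ) (p q : ℕ × ℕ) : hexWeight n x p q = hexWeight n x q p := by
  unfold hexWeight
  rw [min_comm]
  congr 1
  simp only [eq_iff_iff]
  constructor <;> rintro ⟨i, h1, h2, h3⟩ <;> exact ⟨i, h1, h2, h3.symm⟩

theorem hexEntry_symm (n x : ℕ) (p q : ℕ × ℕ) : hexEntry n x p q = hexEntry n x q p := by
  unfold hexEntry
  rw [hexWeight_symm n x p q]
  by_cases h : hexAdj n p q
  · rw [if_pos h, if_pos ((hexAdj_symm n p q).1 h)]
  · rw [if_neg h, if_neg (fun h' => h ((hexAdj_symm n p q).2 h'))]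

theorem hexEntry_parity (n x : ℕ) (p q : ℕ × ℕ) (h : p.2 % 2 = q.2 % 2) :
    hexEntry n x p q = 0 := by
  unfold hexEntry
  rw [if_neg]
  unfold hexAdj
  rintro (⟨h1, h2⟩ | ⟨h1, (h2 | ⟨k, h2⟩)⟩ | ⟨h1, (h2 | ⟨k, h2⟩)⟩) <;> omega

theorem hexAdj_phi (n m : ℕ) (p q : Fin (m + 1) × Fin (n + 1)) (hq : q ≠ (0, 0)) :
    hexAdj n (hexPhi n m (Sum.inl p)) (hexPhi n m (Sum.inr q)) ↔
      (q.1.val = p.1.val ∧ q.2.val = p.2.val) ∨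
      (q.1.val = p.1.val + 1 ∧ q.2.val = p.2.val) ∨
      (q.1.val = p.1.val ∧ q.2.val = p.2.val + 1) := by
  obtain ⟨⟨a, ha⟩, ⟨b, hb⟩⟩ := p
  obtain ⟨⟨c, hc⟩, ⟨d, hd⟩⟩ := q
  simp only [ne_eq, Prod.mk.injEq, Fin.ext_iff, Fin.val_zero] at hq
  simp only [hexPhi, hexAdj]
  split_ifs with h0
  · simp only
    constructor
    · rintro (⟨h1, h2⟩ | ⟨h1, (h2 | ⟨k, h2⟩)⟩ | ⟨h1, (h2 | ⟨k, h2⟩)⟩) <;> omega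
    · rintro (h | h | h)
      · right; left
        exact ⟨by omega, Or.inl ⟨trivial, by omega⟩⟩
      · left; omega
      · omega
  · simp only
    constructor
    · rintro (⟨h1, h2⟩ | ⟨h1, (h2 | ⟨k, h2⟩)⟩ | ⟨h1, (h2 | ⟨k, h2⟩)⟩) <;> omega
    · rintro (h | h | h)
      · left; omega
      · right; right
        exact ⟨by omega, Or.inr ⟨d, by omega, by omega, by omega, by omega⟩⟩
      · left; omega

theorem hexEntry_phi (n m x : ℕ) (p q : Fin (m + 1) × Fin (n + 1)) (hq : q ≠ (0, 0)) :
    hexEntry n x (hexPhi n m (Sum.inl p)) (hexPhi n m (Sum.inr q)) = gridM n m x p q := by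
  unfold hexEntry
  simp only [hexAdj_phi n m p q hq]
  obtain ⟨⟨a, ha⟩, ⟨b, hb⟩⟩ := p
  obtain ⟨⟨c, hc⟩, ⟨d, hd⟩⟩ := q
  have hw : hexWeight n x (hexPhi n m (Sum.inl (⟨a, ha⟩, ⟨b, hb⟩)))
      (hexPhi n m (Sum.inr (⟨c, hc⟩, ⟨d, hd⟩))) =
      if a = 0 ∧ c = 0 ∧ d = b + 1 then ((x : ℝ) + (d : ℝ)) / (d : ℝ) else 1 := by
    have hP : hexPhi n m (Sum.inl (⟨a, ha⟩, ⟨b, hb⟩)) = (a + 1, 2 * b + 2) := rfl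
    obtain ⟨e, f, hQ, hef⟩ : ∃ e f, hexPhi n m (Sum.inr (⟨c, hc⟩, ⟨d, hd⟩)) = (e, f) ∧
        ((d = 0 ∧ e = c ∧ f = 1) ∨ (d ≠ 0 ∧ e = c + 1 ∧ f = 2 * d + 1)) := by
      by_cases h0 : d = 0
      · exact ⟨c, 1, by simp [hexPhi, h0], by omega⟩
      · exact ⟨c + 1, 2 * d + 1, by simp [hexPhi, h0], by omega⟩
    rw [hP, hQ]
    unfold hexWeight
    by_cases h : a = 0 ∧ c = 0 ∧ d = b + 1
    · rw [if_pos h, if_pos]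
      · have e : min (2 * b + 2) f / 2 = d := by omega
        simp only [e]
      · refine ⟨d, by omega, by omega, Or.inl ?_⟩
        simp only [Prod.mk.injEq]
        omega
    · rw [if_neg h, if_neg]
      rintro ⟨i, h1, h2, h3⟩
      simp only [Prod.mk.injEq] at h3
      omega
  rw [hw]
  simp only [gridM]
  split_ifs <;> first | rfl | omega

/-- **Theorem 2**.  Fix `n, m ≥ 1` and `x : ℕ`.  Let `A` be the weighted adjacency
matrix of the hexagonal grid `H_{n,m}` in which the edge `v_{2i}¹ v_{2i+1}¹` has weight
`(x+i)/i` for each `1 ≤ i ≤ n` and every other edge has weight `1`.  Then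
`det A = (-1)^(nm+n+m) * (x+n+m choose n)²`. -/
theorem det_weighted_hexagonal_grid (n m x : ℕ) (hn : 1 ≤ n) (hm : 1 ≤ m) :
    (hexWMatrix n m x).det =
      (-1 : ℝ) ^ (n * m + n + m) * ((x + n + m).choose n : ℝ) ^ 2 := by
  classical
  set M := gridM n m x with hM
  have hu : IsUnit M.det := by rw [hM, gridM_det]; exact isUnit_one
  set K := fromBlocks 0 M Mᵀ 0 with hK
  set Y := fromBlocks 0 (M⁻¹)ᵀ M⁻¹ 0 with hY
  have hKY : K * Y = 1 := by
    rw [hK, hY, fromBlocks_multiply]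
    simp only [Matrix.zero_mul, Matrix.mul_zero, zero_add, add_zero, Matrix.mul_nonsing_inv _ hu,
      ← Matrix.transpose_mul, Matrix.nonsing_inv_mul _ hu, Matrix.transpose_one, fromBlocks_one]
  have hJ := jacobi_minor K Y hKY (hexBad n m)
  have hA : (hexWMatrix n m x).det = (toSquareBlockProp K fun i => ¬ hexBad n m i).det := by
    rw [← det_submatrix_equiv_self (hexEquiv n m)]
    congr 1
    ext ⟨a, ha⟩ ⟨b, hb⟩
    have e : (hexWMatrix n m x).submatrix (hexEquiv n m) (hexEquiv n m) ⟨a, ha⟩ ⟨b, hb⟩ =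
      hexEntry n x (hexPhi n m a) (hexPhi n m b) := rfl
    rw [e]
    simp only [toSquareBlockProp_def, Matrix.of_apply]
    rcases a with a | a <;> rcases b with b | b
    · rw [hexEntry_parity]
      · rfl
      · simp [hexPhi]
    · rw [hexEntry_phi n m x a b]
      · rfl
      · rintro rfl
        exact hb (Or.inr rfl)
    · rw [hexEntry_symm, hexEntry_phi n m x b a]
      · rfl
      · rintro rfl
        exact ha (Or.inr rfl)
    · rw [hexEntry_parity]
      · rfl
      · simp only [hexPhi]
        split_ifs <;> simp only <;> omega
  have hB : (toSquareBlockProp Y (hexBad n m)).det =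
      - ((-1) ^ (m + n) * ((x + m + n).choose n : ℝ)) ^ 2 := by
    have h := det_two_block Y (Sum.inl (Fin.last m, Fin.last n)) (Sum.inr (0, 0)) (by simp)
    have h' : (toSquareBlockProp Y (hexBad n m)).det =
      (toSquareBlockProp Y (fun a => a = Sum.inl (Fin.last m, Fin.last n) ∨
        a = Sum.inr (0, 0))).det := by
      congr!
    rw [h', h]
    simp only [hY, fromBlocks_apply₁₁, fromBlocks_apply₁₂, fromBlocks_apply₂₁,
      fromBlocks_apply₂₂, Matrix.transpose_apply, hM, gridM_inv_entry]
    simp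
    ring
  have hKd : K.det = (-1) ^ ((m + 1) * (n + 1)) := by
    rw [hK, det_antidiag, det_transpose, hM, gridM_det]
    simp
  rw [hA, ← hJ, hB, hKd]
  have e1 : x + m + n = x + n + m := by ring
  have e2 : (m + 1) * (n + 1) = n * m + n + m + 1 := by ring
  rw [e1, e2, pow_succ, mul_pow, ← pow_mul, mul_comm (m + n) 2, pow_mul]
  simp
end

section
/- For all integers $k, n \geq 1$, the hexagonal grid $H_{n,k}$ is non-singular; that is, the determinant of its adjacency matrix is nonzero. -/
/-- The (0-1) adjacency matrix of the hexagonal grid `H_{n,m}`, indexed by its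
vertices. -/
noncomputable def hexMatrix (n m : ℕ) :
    Matrix {p // p ∈ hexVerts n m} {p // p ∈ hexVerts n m} ℝ :=
  open scoped Classical in
  fun p q => if hexAdj n p.1 q.1 then 1 else 0

lemma hexAdj_iff (n i j i' j' : ℕ) : hexAdj n (i, j) (i', j') ↔
    (i = i' ∧ (j + 1 = j' ∨ j' + 1 = j)) ∨
    (i = i' + 1 ∧ ((j' = 1 ∧ j = 2) ∨ (j' = j + 1 ∧ j % 2 = 1 ∧ 3 ≤ j ∧ j ≤ 2 * n + 1))) ∨
    (i' = i + 1 ∧ ((j = 1 ∧ j' = 2) ∨ (j = j' + 1 ∧ j' % 2 = 1 ∧ 3 ≤ j' ∧ j' ≤ 2 * n + 1))) := by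
  have key : ∀ a b : ℕ, (∃ k, 1 ≤ k ∧ k ≤ n ∧ a = 2 * k + 2 ∧ b = 2 * k + 1) ↔
      (a = b + 1 ∧ b % 2 = 1 ∧ 3 ≤ b ∧ b ≤ 2 * n + 1) := by
    intro a b
    constructor
    · rintro ⟨k, h⟩
      omega
    · intro h
      exact ⟨b / 2, by omega⟩
  simp only [hexAdj, key]

lemma mem_hexVerts_s8 (n m i j : ℕ) : (i, j) ∈ hexVerts n m ↔
    (1 ≤ i ∧ i ≤ m ∧ 1 ≤ j ∧ j ≤ 2 * n + 2) ∨ (i = m + 1 ∧ 2 ≤ j ∧ j ≤ 2 * n + 1) := by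
  simp only [hexVerts, hexVertex, Finset.mem_filter, Finset.mem_product, Finset.mem_range]
  omega

/-- Extension by zero of a vector indexed by the vertices. -/
noncomputable def hexExt (n m : ℕ) (v : {p // p ∈ hexVerts n m} → ℝ) (i j : ℕ) : ℝ :=
  if h : (i, j) ∈ hexVerts n m then v ⟨(i, j), h⟩ else 0

lemma hexExt_eq_zero {n m : ℕ} (v : {p // p ∈ hexVerts n m} → ℝ) {i j : ℕ}
    (h : (i, j) ∉ hexVerts n m) : hexExt n m v i j = 0 := by
  simp [hexExt, h]

lemma hex_sum {n m : ℕ} (v : {p // p ∈ hexVerts n m} → ℝ)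
    (hv : (hexMatrix n m).mulVec v = 0) (i j : ℕ) (hp : (i, j) ∈ hexVerts n m)
    (S : Finset (ℕ × ℕ))
    (hS : ∀ a b, (a, b) ∈ hexVerts n m → (hexAdj n (i, j) (a, b) ↔ (a, b) ∈ S)) :
    ∑ q ∈ S, hexExt n m v q.1 q.2 = 0 := by
  classical
  have h := congrFun hv ⟨(i, j), hp⟩
  simp only [Matrix.mulVec, dotProduct, hexMatrix, Pi.zero_apply] at h
  rw [← h]
  have h1 : ∀ q : {p // p ∈ hexVerts n m},
      (if hexAdj n (i, j) q.1 then (1 : ℝ) else 0) * v q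
        = (fun q : ℕ × ℕ => if q ∈ S then hexExt n m v q.1 q.2 else 0) q.1 := by
    rintro ⟨⟨a, b⟩, hq⟩
    simp [hS a b hq, hexExt, hq]
  rw [Finset.sum_congr rfl (fun q _ => h1 q), Finset.sum_coe_sort (hexVerts n m)
    (fun q : ℕ × ℕ => if q ∈ S then hexExt n m v q.1 q.2 else 0),
    ← Finset.sum_filter]
  symm
  apply Finset.sum_subset
  · intro q hq
    exact (Finset.mem_filter.1 hq).2
  · rintro ⟨a, b⟩ hq hq'
    apply hexExt_eq_zero
    intro hh
    exact hq' (Finset.mem_filter.2 ⟨hh, hq⟩)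

lemma hex_three {n m : ℕ} (v : {p // p ∈ hexVerts n m} → ℝ)
    (hv : (hexMatrix n m).mulVec v = 0) (i j : ℕ) (hp : (i, j) ∈ hexVerts n m)
    (a b c a' b' c' : ℕ) (h1 : (a, a') ≠ (b, b')) (h2 : (a, a') ≠ (c, c'))
    (h3 : (b, b') ≠ (c, c'))
    (hS : ∀ s t, (s, t) ∈ hexVerts n m → (hexAdj n (i, j) (s, t) ↔
      (s = a ∧ t = a') ∨ (s = b ∧ t = b') ∨ (s = c ∧ t = c'))) :
    hexExt n m v a a' + hexExt n m v b b' + hexExt n m v c c' = 0 := by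
  have h := hex_sum v hv i j hp {(a, a'), (b, b'), (c, c')} (by
    intro s t hst
    rw [hS s t hst]
    simp)
  rw [Finset.sum_insert (by simp [h1, h2]), Finset.sum_insert (by simpa using h3),
    Finset.sum_singleton] at h
  linarith

/-- The even columns. -/
lemma even_part {n m : ℕ} (x : ℕ → ℕ → ℝ)
    (h0 : ∀ j, x 0 j = 0)
    (hlast : x (m + 1) (2 * n + 2) = 0)
    (e1 : ∀ i, i < m → x (i + 1) 2 + x (i + 2) 2 = 0)
    (e2 : ∀ i k, i ≤ m → k < n →
      x (i + 1) (2 * k + 2) + x (i + 1) (2 * k + 4) + x i (2 * k + 4) = 0) :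
    ∀ i k, i ≤ m → k ≤ n → x (i + 1) (2 * k + 2) = 0 := by
  have key : ∀ k, k ≤ n → ∀ i, i ≤ m →
      x (i + 1) (2 * k + 2) = (-1) ^ (i + k) * (x 1 2 * ((i + k).choose k : ℝ)) := by
    intro k
    induction k with
    | zero =>
      intro _ i
      induction i with
      | zero => simp
      | succ i ih =>
        intro hi
        have h1 := ih (by omega)
        have h2 := e1 i (by omega)
        simp only [Nat.mul_zero, Nat.zero_add, Nat.add_zero, Nat.choose_zero_right] at *
        rw [pow_succ]
        linarith
    | succ k ihk =>
      intro hk i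
      have ihk := ihk (by omega)
      induction i with
      | zero =>
        intro hi
        have h1 := ihk 0 hi
        have h2 := e2 0 k hi (by omega)
        simp only [h0, Nat.zero_add, Nat.choose_self] at *
        rw [pow_succ]
        rw [show 2 * (k + 1) + 2 = 2 * k + 4 by ring]
        linarith
      | succ i ih =>
        intro hi
        have h1 := ih (by omega)
        have h2 := e2 (i + 1) k hi (by omega)
        have h3 := ihk (i + 1) hi
        rw [show 2 * (k + 1) + 2 = 2 * k + 4 by ring] at *
        have hc : ((i + 1 + (k + 1)).choose (k + 1) : ℝ)
            = ((i + 1 + k).choose k : ℝ) + ((i + (k + 1)).choose (k + 1) : ℝ) := by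
          rw [show i + 1 + (k + 1) = (i + 1 + k) + 1 by ring, Nat.choose_succ_succ,
            show i + (k + 1) = i + 1 + k by ring]
          push_cast
          rfl
        rw [hc]
        rw [h1, h3] at h2
        have p1 : (-1 : ℝ) ^ (i + 1 + (k + 1)) = (-1) ^ (i + k) := by ring
        have p2 : (-1 : ℝ) ^ (i + 1 + k) = - (-1) ^ (i + k) := by ring
        have p3 : (-1 : ℝ) ^ (i + (k + 1)) = - (-1) ^ (i + k) := by ring
        rw [p2, p3] at h2
        rw [p1]
        linarith
  have hc := key n le_rfl m le_rfl
  rw [hlast] at hc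
  have hpos : ((m + n).choose n : ℝ) ≠ 0 := by
    exact_mod_cast (Nat.choose_pos (by omega)).ne'
  have hx : x 1 2 = 0 := by
    have := hc.symm
    simpa [hpos] using this
  intro i k hi hk
  rw [key k hk i hi, hx]
  simp

/-- The odd columns. -/
lemma odd_part {n m : ℕ} (x : ℕ → ℕ → ℝ)
    (h0 : ∀ j, x 0 j = 0) (hm : ∀ j, x (m + 2) j = 0)
    (hn : ∀ i, x i (2 * n + 5) = 0)
    (hlast : x (m + 1) 1 = 0)
    (e3 : ∀ i, i ≤ m → x (i + 1) 1 + x (i + 1) 3 + x i 1 = 0)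
    (e4 : ∀ i k, i ≤ m → k ≤ n → (i < m ∨ k < n) →
      x (i + 1) (2 * k + 3) + x (i + 1) (2 * k + 5) + x (i + 2) (2 * k + 3) = 0) :
    (∀ i, i ≤ m → x (i + 1) 1 = 0) ∧
    ∀ i k, i ≤ m → k ≤ n → x (i + 1) (2 * k + 3) = 0 := by
  set d := x (m + 1) (2 * n + 3) with hd
  have key : ∀ a k, k + a = n → ∀ b i, i + b = m →
      x (i + 1) (2 * k + 3) = (-1) ^ (a + b) * (d * ((a + b).choose a : ℝ)) := by
    intro a
    induction a with
    | zero =>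
      intro k hk b
      obtain rfl : k = n := by omega
      induction b with
      | zero =>
        intro i hi
        obtain rfl : i = m := by omega
        simp [hd]
      | succ b ih =>
        intro i hi
        have h1 := ih (i + 1) (by omega)
        have h2 := e4 i k (by omega) le_rfl (by omega)
        rw [hn, h1] at h2
        simp only [Nat.zero_add, Nat.choose_zero_right] at *
        rw [pow_succ]
        linarith
    | succ a iha =>
      intro k hk b
      have iha := iha (k + 1) (by omega)
      induction b with
      | zero =>
        intro i hi
        obtain rfl : i = m := by omega
        have h1 := iha 0 i (by omega)
        have h2 := e4 i k (by omega) (by omega) (by omega)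
        rw [hm] at h2
        rw [show 2 * (k + 1) + 3 = 2 * k + 5 by ring] at h1
        simp only [Nat.add_zero, Nat.choose_self] at *
        rw [pow_succ]
        linarith
      | succ b ih =>
        intro i hi
        have h1 := ih (i + 1) (by omega)
        have h2 := e4 i k (by omega) (by omega) (by omega)
        have h3 := iha (b + 1) i hi
        rw [show 2 * (k + 1) + 3 = 2 * k + 5 by ring] at h3
        have hc : ((a + 1 + (b + 1)).choose (a + 1) : ℝ)
            = ((a + (b + 1)).choose a : ℝ) + ((a + 1 + b).choose (a + 1) : ℝ) := by
          rw [show a + 1 + (b + 1) = (a + (b + 1)) + 1 by ring, Nat.choose_succ_succ,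
            show a + 1 + b = a + (b + 1) by ring]
          push_cast
          rfl
        rw [hc]
        rw [h1, h3] at h2
        have p1 : (-1 : ℝ) ^ (a + 1 + (b + 1)) = (-1) ^ (a + b) := by ring
        have p2 : (-1 : ℝ) ^ (a + 1 + b) = - (-1) ^ (a + b) := by ring
        have p3 : (-1 : ℝ) ^ (a + (b + 1)) = - (-1) ^ (a + b) := by ring
        rw [p2, p3] at h2
        rw [p1]
        linarith
  have key2 : ∀ i, i ≤ m → ∃ P : ℝ, 0 < P ∧
      x (i + 1) 1 = (-1) ^ (i + 1) * ((-1) ^ (n + m) * d * P) := by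
    have h3 : ∀ i, i ≤ m → ∃ C : ℝ, 0 < C ∧
        x (i + 1) 3 = (-1) ^ i * ((-1) ^ (n + m) * d * C) := by
      intro i hi
      obtain ⟨b, rfl⟩ := Nat.exists_eq_add_of_le hi
      refine ⟨((n + b).choose n : ℝ), by exact_mod_cast Nat.choose_pos (by omega), ?_⟩
      have h := key n 0 (by omega) b i rfl
      simp only [Nat.mul_zero, Nat.zero_add] at h
      rw [h]
      have p : (-1 : ℝ) ^ (n + (i + b)) = (-1) ^ i * (-1) ^ (n + b) := by ring
      have q : (-1 : ℝ) ^ i * (-1) ^ i = 1 := by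
        rw [← mul_pow]
        simp
      rw [p]
      linear_combination (-(-1) ^ (n + b) * d * ((n + b).choose n : ℝ)) * q
    intro i
    induction i with
    | zero =>
      intro hi
      obtain ⟨C, hC, h⟩ := h3 0 hi
      refine ⟨C, hC, ?_⟩
      have h2 := e3 0 hi
      rw [h0, h] at h2
      rw [pow_succ]
      linarith
    | succ i ih =>
      intro hi
      obtain ⟨C, hC, h⟩ := h3 (i + 1) hi
      obtain ⟨P, hP, h'⟩ := ih (by omega)
      refine ⟨C + P, by positivity, ?_⟩
      have h2 := e3 (i + 1) hi
      rw [h, h'] at h2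
      rw [pow_succ]
      linarith
  have hd0 : d = 0 := by
    obtain ⟨P, hP, h⟩ := key2 m le_rfl
    rw [hlast] at h
    simpa [hP.ne'] using h.symm
  constructor
  · intro i hi
    obtain ⟨P, hP, h⟩ := key2 i hi
    rw [h, hd0]
    simp
  · intro i k hi hk
    rw [key (n - k) k (by omega) (m - i) i (by omega), hd0]
    simp

/-- For all integers `k, n ≥ 1`, the hexagonal grid `H_{n,k}` is non-singular: the
determinant of its adjacency matrix is nonzero. -/
theorem hexagonal_grid_nonsingular (k n : ℕ) (hk : 1 ≤ k) (hn : 1 ≤ n) :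
    (hexMatrix n k).det ≠ 0 := by
  intro hdet
  obtain ⟨v, hv0, hv⟩ := Matrix.exists_mulVec_eq_zero_iff.2 hdet
  apply hv0
  have hz : ∀ i j, ¬ ((1 ≤ i ∧ i ≤ k ∧ 1 ≤ j ∧ j ≤ 2 * n + 2) ∨
      (i = k + 1 ∧ 2 ≤ j ∧ j ≤ 2 * n + 1)) → hexExt n k v i j = 0 := by
    intro i j h
    exact hexExt_eq_zero v (by rwa [mem_hexVerts_s8])
  have hev := even_part (n := n) (m := k) (hexExt n k v)
    (fun j => hz _ _ (by omega)) (hz _ _ (by omega))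
    (fun i hi => by
      have := hex_three v hv (i + 1) 1 (by rw [mem_hexVerts_s8]; omega)
        (i + 1) (i + 2) 0 2 2 0 (by simp) (by simp) (by simp)
        (by intro s t; rw [mem_hexVerts_s8, hexAdj_iff]; omega)
      rw [hz 0 0 (by omega)] at this
      linarith)
    (fun i l hi hl => hex_three v hv (i + 1) (2 * l + 3) (by rw [mem_hexVerts_s8]; omega)
        (i + 1) (i + 1) i _ _ _ (by simp) (by simp) (by simp)
        (by intro s t; rw [mem_hexVerts_s8, hexAdj_iff]; omega))
  obtain ⟨ho1, ho2⟩ := odd_part (n := n - 1) (m := k) (hexExt n k v)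
    (fun j => hz _ _ (by omega)) (fun j => hz _ _ (by omega))
    (fun i => hz _ _ (by omega)) (hz _ _ (by omega))
    (fun i hi => hex_three v hv (i + 1) 2 (by rw [mem_hexVerts_s8]; omega)
        (i + 1) (i + 1) i _ _ _ (by simp) (by simp) (by simp)
        (by intro s t; rw [mem_hexVerts_s8, hexAdj_iff]; omega))
    (fun i l hi hl hil => hex_three v hv (i + 1) (2 * l + 4) (by rw [mem_hexVerts_s8]; omega)
        (i + 1) (i + 1) (i + 2) _ _ _ (by simp) (by simp) (by simp)
        (by intro s t; rw [mem_hexVerts_s8, hexAdj_iff]; omega))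
  funext ⟨⟨i, j⟩, hp⟩
  have hx : v ⟨(i, j), hp⟩ = hexExt n k v i j := by simp [hexExt, hp]
  rw [hx, Pi.zero_apply]
  rw [mem_hexVerts_s8] at hp
  obtain ⟨i, rfl⟩ : ∃ i', i = i' + 1 := ⟨i - 1, by omega⟩
  rcases Nat.even_or_odd' j with ⟨l, rfl | rfl⟩
  · obtain ⟨l, rfl⟩ : ∃ l', l = l' + 1 := ⟨l - 1, by omega⟩
    exact hev i l (by omega) (by omega)
  · rcases l with _ | l
    · exact ho1 i (by omega)
    · exact ho2 i l (by omega) (by omega)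
end
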